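/- arXiv:1212.1387 — 2 statements merged into one kernel-verified Lean document; each statement's English description precedes it below -/
import Mathlib

section
/- Every SK-matrix A is a τ^<-matrix: l(A) > 0, every principal submatrix of A has a real eigenvalue, and l(A(α)) < l(A(β)) < ∞ whenever ∅ ≠ β ⊊ α ⊆ {1,…,n}. -/
open Matrix

/-- The minor of the matrix `A` on the row set `α` and the column set `β`
(rows and columns taken in increasing order); junk value `0` if the
cardinalities of `α` and `β` differ. -/
noncomputable def minorOn {n : ℕ} (A : Matrix (Fin n) (Fin n) ℝ)
    (α β : Finset (Fin n)) : ℝ :=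
  if h : β.card = α.card then
    (A.submatrix (⇑(α.orderEmbOfFin rfl)) (⇑(β.orderEmbOfFin h))).det
  else 0

/-- The principal submatrix `A(α)` of `A` on the index set `α`. -/
def psub {n : ℕ} (A : Matrix (Fin n) (Fin n) ℝ) (α : Finset (Fin n)) :
    Matrix (Fin α.card) (Fin α.card) ℝ :=
  A.submatrix (⇑(α.orderEmbOfFin rfl)) (⇑(α.orderEmbOfFin rfl))

/-- `A` is a Kotelyansky (K) matrix: all principal minors are positive and all
almost principal minors are nonnegative. -/
def IsK {n : ℕ} (A : Matrix (Fin n) (Fin n) ℝ) : Prop :=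
  (∀ α : Finset (Fin n), α.Nonempty → 0 < minorOn A α α) ∧
  (∀ (α : Finset (Fin n)) (r s : Fin n), r ∈ α → s ∈ α → r ≠ s →
    0 ≤ minorOn A (α.erase r) (α.erase s))

/-- `A` is a strictly Kotelyansky (SK) matrix: all principal minors and all
almost principal minors are positive. -/
def IsSK {n : ℕ} (A : Matrix (Fin n) (Fin n) ℝ) : Prop :=
  (∀ α : Finset (Fin n), α.Nonempty → 0 < minorOn A α α) ∧
  (∀ (α : Finset (Fin n)) (r s : Fin n), r ∈ α → s ∈ α → r ≠ s →
    0 < minorOn A (α.erase r) (α.erase s))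

/-- The `j`-th compound matrix of `A`: the matrix of all `j×j` minors of `A`,
indexed by the `j`-element subsets of the index set. -/
noncomputable def compound {m : ℕ} (A : Matrix (Fin m) (Fin m) ℝ) (j : ℕ) :
    Matrix {s : Finset (Fin m) // s.card = j} {s : Finset (Fin m) // s.card = j} ℝ :=
  fun s t => minorOn A s.1 t.1

/-- `A` is J-sign-symmetric for the subset `J` of its index set. -/
def IsJS {ι : Type*} (J : Set ι) (A : Matrix ι ι ℝ) : Prop :=
  (∀ i j, ((i ∈ J ∧ j ∈ J) ∨ (i ∉ J ∧ j ∉ J)) → 0 ≤ A i j) ∧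
  (∀ i j, ((i ∈ J ∧ j ∉ J) ∨ (i ∉ J ∧ j ∈ J)) → A i j ≤ 0)

/-- `A` is strictly J-sign-symmetric: J-sign-symmetric with no zero entries. -/
def IsSJS {ι : Type*} (J : Set ι) (A : Matrix ι ι ℝ) : Prop :=
  IsJS J A ∧ ∀ i j, A i j ≠ 0

/-- `A` is strictly totally J-sign-symmetric: every compound matrix `A^(j)`,
`1 ≤ j ≤ n`, is strictly J-sign-symmetric for some subset of its index set. -/
def IsSTJS {n : ℕ} (A : Matrix (Fin n) (Fin n) ℝ) : Prop :=
  ∀ j, 1 ≤ j → j ≤ n →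
    ∃ J : Set {s : Finset (Fin n) // s.card = j}, IsSJS J (compound A j)

/-- `A` is J-sign-symmetric Kotelyansky (JSK). -/
def IsJSK {n : ℕ} (A : Matrix (Fin n) (Fin n) ℝ) : Prop :=
  (∀ α : Finset (Fin n), α.Nonempty → 0 < minorOn A α α) ∧
  ∀ α : Finset (Fin n), 2 ≤ α.card →
    ∃ J : Set {s : Finset (Fin α.card) // s.card = α.card - 1},
      IsJS J (compound (psub A α) (α.card - 1))

/-- `A` is strictly J-sign-symmetric Kotelyansky (SJSK). -/
def IsSJSK {n : ℕ} (A : Matrix (Fin n) (Fin n) ℝ) : Prop :=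
  0 < A.det ∧
  ∀ α : Finset (Fin n), 2 ≤ α.card →
    ∃ J : Set {s : Finset (Fin α.card) // s.card = α.card - 1},
      IsSJS J (compound (psub A α) (α.card - 1))

/-- `l(B)`: the smallest real eigenvalue of `B`, or `∞` (`⊤` in `EReal`) if `B`
has no real eigenvalues. -/
noncomputable def lval {m : ℕ} (B : Matrix (Fin m) (Fin m) ℝ) : EReal :=
  sInf (insert (⊤ : EReal) ((fun t : ℝ => (t : EReal)) '' {t : ℝ | B.charpoly.IsRoot t}))

lemma root_iff {m : ℕ} (M : Matrix (Fin m) (Fin m) ℝ) (t : ℝ) :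
    M.charpoly.IsRoot t ↔ ∃ v : Fin m → ℝ, v ≠ 0 ∧ M *ᵥ v = t • v := by
  rw [Polynomial.IsRoot.def, Matrix.eval_charpoly, ← Matrix.exists_mulVec_eq_zero_iff]
  refine exists_congr fun v => and_congr_right fun _ => ?_
  rw [Matrix.sub_mulVec, sub_eq_zero, eq_comm]
  simp [Matrix.scalar_apply, ← Matrix.smul_one_eq_diagonal, Matrix.smul_mulVec]

lemma det_add_single {m : ℕ} (N : Matrix (Fin (m+1)) (Fin (m+1)) ℝ) (k : Fin (m+1)) (c : ℝ) :
    (N + Matrix.diagonal (Pi.single k c)).det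
      = N.det + c * (N.submatrix k.succAbove k.succAbove).det := by
  have h1 : N + Matrix.diagonal (Pi.single k c)
      = N.updateRow k (N k + c • Pi.single k 1) := by
    ext i j
    rw [Matrix.updateRow_apply]
    by_cases hi : i = k
    · subst hi
      by_cases hj : j = i
      · subst hj; simp
      · simp [hj, Matrix.diagonal_apply_ne _ (Ne.symm hj)]
    · simp [hi, Matrix.diagonal_apply]
  rw [h1, Matrix.det_updateRow_add, Matrix.det_updateRow_smul, Matrix.updateRow_eq_self,
    ← Matrix.adjugate_apply, Matrix.adjugate_fin_succ_eq_det_submatrix]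
  simp [← two_mul]

lemma pmat_det {m : ℕ} : ∀ (M : Matrix (Fin m) (Fin m) ℝ),
    (∀ (k : ℕ) (e : Fin k → Fin m), StrictMono e → 0 < (M.submatrix e e).det) →
    ∀ d : Fin m → ℝ, (∀ i, 0 ≤ d i) → 0 < (M + Matrix.diagonal d).det := by
  induction m with
  | zero => intro M _ d _; simp
  | succ m ih =>
    intro M hM d hd
    have key : ∀ s : Finset (Fin (m+1)),
        0 < (M + Matrix.diagonal (fun i => if i ∈ s then d i else 0)).det := by
      intro s
      induction s using Finset.induction_on with
      | empty => simpa using hM (m+1) id strictMono_id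
      | insert k s hk ihs =>
        have h1 : M + Matrix.diagonal (fun i => if i ∈ insert k s then d i else 0)
            = (M + Matrix.diagonal (fun i => if i ∈ s then d i else 0))
              + Matrix.diagonal (Pi.single k (d k)) := by
          rw [add_assoc, Matrix.diagonal_add]
          congr 2
          ext i
          by_cases hi : i = k
          · subst hi; simp [hk]
          · simp [hi]
        rw [h1, det_add_single]
        have h2 := ih (M.submatrix k.succAbove k.succAbove)
          (fun j e he => by
            simpa using hM j (k.succAbove ∘ e) ((Fin.strictMono_succAbove k).comp he))
          (fun i => if k.succAbove i ∈ s then d (k.succAbove i) else 0)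
          (fun i => by split_ifs <;> simp [hd])
        have h3 : (M + Matrix.diagonal (fun i => if i ∈ s then d i else 0)).submatrix
            k.succAbove k.succAbove = M.submatrix k.succAbove k.succAbove
            + Matrix.diagonal (fun i => if k.succAbove i ∈ s then d (k.succAbove i) else 0) := by
          ext i j
          simp [Matrix.diagonal_apply, (Fin.succAbove_right_injective).eq_iff]
        rw [h3]
        have := mul_nonneg (hd k) h2.le
        linarith
    simpa using key Finset.univ

lemma pmat_root {m : ℕ} (M : Matrix (Fin m) (Fin m) ℝ)
    (hM : ∀ (k : ℕ) (e : Fin k → Fin m), StrictMono e → 0 < (M.submatrix e e).det)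
    (t : ℝ) (ht : M.charpoly.IsRoot t) : 0 < t := by
  by_contra hn
  rw [root_iff] at ht
  obtain ⟨v, hv, h⟩ := ht
  have h1 := pmat_det M hM (fun _ => -t) (fun _ => by linarith)
  refine h1.ne' (Matrix.exists_mulVec_eq_zero_iff.1 ⟨v, hv, ?_⟩)
  rw [Matrix.add_mulVec, h]
  ext i
  simp [Matrix.mulVec_diagonal]

lemma pos_mulVec {m : ℕ} (B : Matrix (Fin m) (Fin m) ℝ) (hB : ∀ i j, 0 < B i j)
    (z : Fin m → ℝ) (hz : ∀ i, 0 ≤ z i) (hz0 : z ≠ 0) (i : Fin m) : 0 < (B *ᵥ z) i := by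
  obtain ⟨j, hj⟩ := Function.ne_iff.1 hz0
  rw [Matrix.mulVec, dotProduct]
  refine Finset.sum_pos' (fun k _ => mul_nonneg (hB i k).le (hz k)) ⟨j, Finset.mem_univ _, ?_⟩
  exact mul_pos (hB i j) (lt_of_le_of_ne (hz j) (Ne.symm hj))

lemma perron {m : ℕ} (B : Matrix (Fin (m+1)) (Fin (m+1)) ℝ) (hB : ∀ i j, 0 < B i j) :
    ∃ (ρ : ℝ) (x : Fin (m+1) → ℝ), 0 < ρ ∧ (∀ i, 0 < x i) ∧ B *ᵥ x = ρ • x := by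
  set b : ℝ := ∑ i, ∑ j, B i j
  set K : Set (ℝ × (Fin (m+1) → ℝ)) :=
    (Set.Icc 0 b ×ˢ stdSimplex ℝ (Fin (m+1))) ∩ {p | ∀ i, p.1 * p.2 i ≤ (B *ᵥ p.2) i} with hK
  have hKc : IsCompact K := by
    refine (isCompact_Icc.prod (isCompact_stdSimplex ℝ _)).inter_right ?_
    simp only [Set.ofPred_forall]
    refine isClosed_iInter fun i => isClosed_le (by fun_prop) ?_
    simp only [Matrix.mulVec, dotProduct]
    fun_prop
  -- membership criterion
  have hmem : ∀ (r : ℝ) (y : Fin (m+1) → ℝ), 0 ≤ r → (∀ i, 0 ≤ y i) → y ≠ 0 →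
      (∀ i, r * y i ≤ (B *ᵥ y) i) → ∃ y', (r, y') ∈ K := by
    intro r y hr hy hy0 h
    obtain ⟨j, hj⟩ := Function.ne_iff.1 hy0
    have hs : 0 < ∑ i, y i := Finset.sum_pos' (fun k _ => hy k)
      ⟨j, Finset.mem_univ _, lt_of_le_of_ne (hy j) (Ne.symm hj)⟩
    set s := ∑ i, y i with hsdef
    have hsum : ∑ i, (s⁻¹ • y) i = 1 := by
      simp only [Pi.smul_apply, smul_eq_mul, ← Finset.mul_sum]
      rw [← hsdef]; field_simp
    have hnn : ∀ i, 0 ≤ (s⁻¹ • y) i := fun i => by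
      simp only [Pi.smul_apply, smul_eq_mul]
      exact mul_nonneg (inv_nonneg.2 hs.le) (hy i)
    have hle : ∀ i, r * (s⁻¹ • y) i ≤ (B *ᵥ (s⁻¹ • y)) i := fun i => by
      rw [Matrix.mulVec_smul]
      simp only [Pi.smul_apply, smul_eq_mul]
      have := mul_le_mul_of_nonneg_left (h i) (inv_nonneg.2 hs.le)
      linarith
    refine ⟨s⁻¹ • y, ⟨⟨⟨hr, ?_⟩, hnn, hsum⟩, hle⟩⟩
    have hle1 : ∀ i, (s⁻¹ • y) i ≤ 1 := fun i => by
      rw [← hsum]; exact Finset.single_le_sum (fun k _ => hnn k) (Finset.mem_univ i)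
    calc r = ∑ i, r * (s⁻¹ • y) i := by rw [← Finset.mul_sum, hsum, mul_one]
      _ ≤ ∑ i, (B *ᵥ (s⁻¹ • y)) i := Finset.sum_le_sum fun i _ => hle i
      _ ≤ b := by
        refine Finset.sum_le_sum fun i _ => ?_
        rw [Matrix.mulVec, dotProduct]
        refine Finset.sum_le_sum fun j _ => ?_
        have := mul_le_mul_of_nonneg_left (hle1 j) (hB i j).le
        linarith
  have hne : K.Nonempty := by
    have h1 : (1 : Fin (m+1) → ℝ) ≠ 0 := one_ne_zero
    obtain ⟨y', h⟩ := hmem 0 1 le_rfl (fun i => by simp) h1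
      (fun i => by simpa using (pos_mulVec B hB 1 (fun i => by simp) h1 i).le)
    exact ⟨_, h⟩
  obtain ⟨⟨ρ, x⟩, hpK, hmax⟩ := hKc.exists_isMaxOn hne (f := Prod.fst) continuous_fst.continuousOn
  obtain ⟨⟨⟨hρ, -⟩, hx, hxs⟩, hle⟩ := hpK
  simp only at hρ hx hxs hle
  have hx0 : x ≠ 0 := by rintro rfl; simp at hxs
  have hBx : ∀ i, 0 < (B *ᵥ x) i := pos_mulVec B hB x hx hx0
  have heq : B *ᵥ x = ρ • x := by
    by_contra hcon
    have hz0 : B *ᵥ x - ρ • x ≠ 0 := sub_ne_zero.2 hcon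
    have hz := pos_mulVec B hB _ (fun i => by
      have := hle i
      simp only [Pi.sub_apply, Pi.smul_apply, smul_eq_mul]; linarith) hz0
    rw [Matrix.mulVec_sub, Matrix.mulVec_smul] at hz
    obtain ⟨i0, hi0⟩ := Finite.exists_min
      (fun i => (B *ᵥ (B *ᵥ x) - ρ • (B *ᵥ x)) i / (B *ᵥ x) i)
    set ε := (B *ᵥ (B *ᵥ x) - ρ • (B *ᵥ x)) i0 / (B *ᵥ x) i0
    have hε : 0 < ε := div_pos (hz i0) (hBx i0)
    obtain ⟨y', hy'⟩ := hmem (ρ + ε) (B *ᵥ x) (by linarith) (fun i => (hBx i).le)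
      (fun h => (hBx 0).ne' (congrFun h 0)) (fun i => by
        have := hi0 i
        rw [le_div_iff₀ (hBx i)] at this
        simp only [Pi.sub_apply, Pi.smul_apply, smul_eq_mul] at this
        linarith)
    have := hmax hy'
    simp only [Set.mem_setOf_eq] at this
    linarith
  have hρx : ∀ i, 0 < ρ * x i := fun i => by
    have := hBx i
    rw [heq] at this
    simpa using this
  have hρ0 : 0 < ρ := lt_of_le_of_ne hρ (by rintro rfl; simpa using hρx 0)
  exact ⟨ρ, x, hρ0, fun i => (pos_iff_pos_of_mul_pos (hρx i)).1 hρ0, heq⟩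

/-- the comparison step: `B` positive, `B * C = 1`. -/
lemma compare {m : ℕ} (B C : Matrix (Fin (m+1)) (Fin (m+1)) ℝ) (hB : ∀ i j, 0 < B i j)
    (hBC : B * C = 1) (lam : ℝ) (x : Fin (m+1) → ℝ) (hx : ∀ i, 0 < x i)
    (hlam : C *ᵥ x = lam • x) (k : Fin (m+1)) (mu : ℝ) (hmu : 0 < mu) (hle : mu ≤ lam)
    (y : Fin (m+1) → ℝ) (hy : y k = 0) (c : ℝ) (hc : 0 ≤ c)
    (h : C *ᵥ y = mu • y + c • Pi.single k 1) : y = 0 := by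
  have hBCv : ∀ v, B *ᵥ (C *ᵥ v) = v := fun v => by
    rw [Matrix.mulVec_mulVec, hBC, Matrix.one_mulVec]
  have e1 : y = mu • (B *ᵥ y) + c • (B *ᵥ Pi.single k 1) := by
    conv_lhs => rw [← hBCv y, h]
    rw [Matrix.mulVec_add, Matrix.mulVec_smul, Matrix.mulVec_smul]
  have e2 : x = lam • (B *ᵥ x) := by
    conv_lhs => rw [← hBCv x, hlam]
    rw [Matrix.mulVec_smul]
  obtain ⟨i, hi⟩ := Finite.exists_max (fun i => - y i / x i)
  set s := - y i / x i with hs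
  have hs0 : 0 ≤ s := by simpa [hy] using hi k
  have hw : ∀ j, 0 ≤ (y + s • x) j := fun j => by
    have := hi j
    rw [div_le_iff₀ (hx j)] at this
    simp only [Pi.add_apply, Pi.smul_apply, smul_eq_mul]; linarith
  have hwi : (y + s • x) i = 0 := by
    simp only [Pi.add_apply, Pi.smul_apply, smul_eq_mul, hs]
    have := (hx i).ne'
    field_simp; ring
  have hw0 : y + s • x = 0 := by
    by_contra hne
    have hp := pos_mulVec B hB _ hw hne i
    rw [Matrix.mulVec_add, Matrix.mulVec_smul] at hp
    have hy' := congrFun e1 i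
    have hx' := congrFun e2 i
    have hBx := pos_mulVec B hB x (fun j => (hx j).le) (fun hh => (hx 0).ne' (congrFun hh 0)) i
    have hBk : (B *ᵥ Pi.single k 1) i = B i k := by simp
    simp only [Pi.add_apply, Pi.smul_apply, smul_eq_mul, hBk] at hp hy' hx' hwi
    have t1 := mul_pos hmu hp
    have t2 := mul_nonneg hc (hB i k).le
    have t3 := mul_nonneg hs0 (mul_nonneg (sub_nonneg.2 hle) hBx.le)
    have t4 : s * x i = s * (lam * (B *ᵥ x) i) := by rw [← hx']
    nlinarith
  have hk := congrFun hw0 k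
  simp only [Pi.add_apply, Pi.smul_apply, smul_eq_mul, hy, Pi.zero_apply, zero_add] at hk
  have : s = 0 := (mul_eq_zero.1 hk).resolve_right (hx k).ne'
  simpa [this] using hw0

lemma core {m : ℕ} (M : Matrix (Fin (m+1)) (Fin (m+1)) ℝ) (hdet : 0 < M.det)
    (hap : ∀ i j : Fin (m+1), 0 < (M.submatrix i.succAbove j.succAbove).det) :
    ∃ lam : ℝ, M.charpoly.IsRoot lam ∧ ∀ (k : Fin (m+1)) (mu : ℝ), 0 < mu →
      (M.submatrix k.succAbove k.succAbove).charpoly.IsRoot mu → lam < mu := by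
  set D : Matrix (Fin (m+1)) (Fin (m+1)) ℝ := Matrix.diagonal (fun i => (-1) ^ (i : ℕ)) with hD
  have hDD : D * D = 1 := by
    rw [hD, Matrix.diagonal_mul_diagonal, ← Matrix.diagonal_one]
    congr 1; ext i; rw [← mul_pow]; simp
  set B := M.det⁻¹ • (D * M.adjugate * D) with hBdef
  set C := D * M * D with hC
  have hB : ∀ i j, 0 < B i j := by
    intro i j
    have : B i j = M.det⁻¹ * (M.submatrix j.succAbove i.succAbove).det := by
      rw [hBdef, hD, Matrix.smul_apply, Matrix.mul_diagonal, Matrix.diagonal_mul,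
        Matrix.adjugate_fin_succ_eq_det_submatrix, smul_eq_mul]
      have h1 : ((-1 : ℝ) ^ (i:ℕ)) * (-1) ^ (i:ℕ) = 1 := by rw [← mul_pow]; simp
      have h2 : ((-1 : ℝ) ^ (j:ℕ)) * (-1) ^ (j:ℕ) = 1 := by rw [← mul_pow]; simp
      rw [pow_add]
      linear_combination (M.det⁻¹ * (M.submatrix j.succAbove i.succAbove).det) *
        (h1 * ((-1 : ℝ) ^ (j:ℕ)) * (-1) ^ (j:ℕ) + h2)
    rw [this]
    exact mul_pos (inv_pos.2 hdet) (hap j i)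
  have hBC : B * C = 1 := by
    rw [hBdef, hC, Matrix.smul_mul]
    have : D * M.adjugate * D * (D * M * D) = D * (M.adjugate * ((D * D) * M)) * D := by
      simp only [Matrix.mul_assoc]
    rw [this, hDD, Matrix.one_mul, Matrix.adjugate_mul, Matrix.mul_smul, Matrix.smul_mul,
      Matrix.mul_one, hDD, smul_smul, inv_mul_cancel₀ hdet.ne', one_smul]
  have hCB : C * B = 1 := mul_eq_one_comm.1 hBC
  obtain ⟨ρ, x, hρ, hx, hBx⟩ := perron B hB
  have hCx : C *ᵥ x = ρ⁻¹ • x := by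
    have h1 : x = ρ⁻¹ • (B *ᵥ x) := by rw [hBx, smul_smul, inv_mul_cancel₀ hρ.ne', one_smul]
    conv_lhs => rw [h1]
    rw [Matrix.mulVec_smul, Matrix.mulVec_mulVec, hCB, Matrix.one_mulVec]
  have hDDv : ∀ v, D *ᵥ (D *ᵥ v) = v := fun v => by
    rw [Matrix.mulVec_mulVec, hDD, Matrix.one_mulVec]
  refine ⟨ρ⁻¹, (root_iff _ _).2 ⟨D *ᵥ x, ?_, ?_⟩, ?_⟩
  · intro h0
    have := hDDv x
    rw [h0, Matrix.mulVec_zero] at this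
    exact (hx 0).ne (congrFun this 0)
  · rw [hC, ← Matrix.mulVec_mulVec, ← Matrix.mulVec_mulVec] at hCx
    have := congrArg (fun v => D *ᵥ v) hCx
    simpa only [hDDv, Matrix.mulVec_smul] using this
  · intro k mu hmu hroot
    by_contra hle
    rw [not_lt] at hle
    obtain ⟨v, hv, hMv⟩ := (root_iff _ _).1 hroot
    set z : Fin (m+1) → ℝ := k.insertNth (α := fun _ => ℝ) 0 v with hz
    have hMz : M *ᵥ z = mu • z + (M *ᵥ z) k • Pi.single k 1 := by
      ext i
      rcases Fin.eq_self_or_eq_succAbove k i with rfl | ⟨j, rfl⟩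
      · simp [hz]
      · have := congrFun hMv j
        simp only [Matrix.mulVec, dotProduct, Matrix.submatrix_apply, Pi.smul_apply,
          smul_eq_mul] at this
        simp only [Matrix.mulVec, dotProduct, Pi.add_apply, Pi.smul_apply, smul_eq_mul]
        rw [Fin.sum_univ_succAbove _ k]
        simp [hz, this]
    set y := D *ᵥ z with hy
    have hyk : y k = 0 := by
      simp [hy, hD, Matrix.mulVec_diagonal, hz]
    set c := (M *ᵥ z) k * (-1) ^ (k : ℕ) with hc
    have hCy : C *ᵥ y = mu • y + c • Pi.single k 1 := by
      rw [hC, ← Matrix.mulVec_mulVec, ← Matrix.mulVec_mulVec, hy, hDDv]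
      conv_lhs => rw [hMz]
      rw [Matrix.mulVec_add, Matrix.mulVec_smul, Matrix.mulVec_smul]
      congr 1
      ext i
      rw [hc, hD]
      simp only [Pi.smul_apply, Matrix.mulVec_diagonal, smul_eq_mul]
      by_cases hik : i = k
      · subst hik; simp
      · simp [hik]
    have hy0 : y = 0 := by
      rcases le_total 0 c with h0 | h0
      · exact compare B C hB hBC ρ⁻¹ x hx hCx k mu hmu hle y hyk c h0 hCy
      · have := compare B C hB hBC ρ⁻¹ x hx hCx k mu hmu hle (-y) (by simp [hyk]) (-c)
          (by linarith) (by rw [Matrix.mulVec_neg, hCy]; simp [add_comm])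
        simpa using this
    apply hv
    have hz0 : z = 0 := by rw [← hDDv z, ← hy, hy0, Matrix.mulVec_zero]
    ext j
    have := congrFun hz0 (k.succAbove j)
    simpa [hz] using this

lemma lval_eq {n m : ℕ} (A : Matrix (Fin n) (Fin n) ℝ) (α : Finset (Fin n)) (h : α.card = m) :
    lval (psub A α) = lval (A.submatrix (α.orderEmbOfFin h) (α.orderEmbOfFin h)) := by
  subst h; rfl

lemma minorOn_eq {n m : ℕ} (A : Matrix (Fin n) (Fin n) ℝ) (α β : Finset (Fin n))
    (e f : Fin m → Fin n) (he : StrictMono e) (hf : StrictMono f)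
    (hα : Finset.univ.image e = α) (hβ : Finset.univ.image f = β) :
    minorOn A α β = (A.submatrix e f).det := by
  have ca : α.card = m := by
    rw [← hα, Finset.card_image_of_injective _ he.injective]; simp
  have cb : β.card = m := by
    rw [← hβ, Finset.card_image_of_injective _ hf.injective]; simp
  subst ca
  rw [minorOn, dif_pos cb]
  rw [Finset.orderEmbOfFin_unique (s := α) rfl (fun x => by simp [← hα]) he,
    Finset.orderEmbOfFin_unique cb (fun x => by simp [← hβ]) hf]

lemma sk_root_pos {n m : ℕ} (A : Matrix (Fin n) (Fin n) ℝ) (hA : IsSK A)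
    (e : Fin m → Fin n) (he : StrictMono e) (t : ℝ)
    (ht : (A.submatrix e e).charpoly.IsRoot t) : 0 < t := by
  refine pmat_root _ (fun k f hf => ?_) t ht
  rcases Nat.eq_zero_or_pos k with rfl | hk
  · simp
  · have h2 := he.comp hf
    have := hA.1 (Finset.univ.image (e ∘ f)) (by
      exact ⟨_, Finset.mem_image_of_mem _ (Finset.mem_univ ⟨0, hk⟩)⟩)
    rw [minorOn_eq A _ _ (e ∘ f) (e ∘ f) h2 h2 rfl rfl] at this
    simpa using this

lemma lval_lt_of {m : ℕ} (M : Matrix (Fin m) (Fin m) ℝ) (b : EReal) :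
    lval M < b ↔ (⊤ < b ∨ ∃ t : ℝ, M.charpoly.IsRoot t ∧ (t : EReal) < b) := by
  simp [lval, sInf_lt_iff]

lemma lval_mem {m : ℕ} (M : Matrix (Fin m) (Fin m) ℝ) (hm : M.charpoly.Monic) :
    lval M = ⊤ ∨ ∃ t : ℝ, M.charpoly.IsRoot t ∧ lval M = t := by
  have hfin : (insert (⊤ : EReal)
      ((fun t : ℝ => (t : EReal)) '' {t : ℝ | M.charpoly.IsRoot t})).Finite :=
    ((Polynomial.finite_setOfPred_isRoot hm.ne_zero).image _).insert _
  have := (Set.insert_nonempty _ _).csInf_mem hfin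
  rcases this with h | ⟨t, ht, h⟩
  · exact Or.inl h
  · exact Or.inr ⟨t, ht, h.symm⟩

lemma sk_step {n m : ℕ} (A : Matrix (Fin n) (Fin n) ℝ) (hA : IsSK A) (α : Finset (Fin n))
    (h : α.card = m + 1) :
    lval (psub A α) < ⊤ ∧ ∀ a ∈ α, lval (psub A α) < lval (psub A (α.erase a)) := by
  set e := α.orderEmbOfFin h with he
  have hes : StrictMono e := e.strictMono
  have him : Finset.univ.image e = α := by
    ext a
    have := Finset.range_orderEmbOfFin α h
    rw [← Finset.mem_coe (s := α), ← this]; simp [he]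
  have hie : ∀ i : Fin (m+1), Finset.univ.image (e ∘ i.succAbove) = α.erase (e i) := by
    intro i
    ext a
    simp only [Finset.mem_image, Finset.mem_univ, true_and, Finset.mem_erase, ← him,
      Function.comp_apply]
    constructor
    · rintro ⟨j, rfl⟩
      exact ⟨fun hh => Fin.succAbove_ne i j (hes.injective hh), _, rfl⟩
    · rintro ⟨hne, j, rfl⟩
      obtain ⟨l, hl⟩ := Fin.exists_succAbove_eq (x := j) (y := i) (fun hh => hne (by rw [hh]))
      exact ⟨l, by rw [hl]⟩
  have hsm : ∀ i : Fin (m+1), StrictMono (e ∘ i.succAbove) := fun i =>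
    hes.comp (Fin.strictMono_succAbove i)
  have hmemα : ∀ i, e i ∈ α := fun i => Finset.orderEmbOfFin_mem α h i
  obtain ⟨lam, hroot, hlt⟩ := core (A.submatrix e e)
    (by
      have := hA.1 α (Finset.card_pos.1 (by omega))
      rwa [minorOn_eq A α α e e hes hes him him] at this)
    (by
      intro i j
      by_cases hij : i = j
      · subst hij
        rcases (α.erase (e i)).eq_empty_or_nonempty with h0 | h0
        · have hm : m = 0 := by
            have := Finset.card_erase_of_mem (hmemα i)
            rw [h0, h] at this
            simpa using this.symm
          subst hm
          simp
        · have := hA.1 _ h0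
          rw [minorOn_eq A _ _ _ _ (hsm i) (hsm i) (hie i) (hie i)] at this
          simpa using this
      · have := hA.2 α (e i) (e j) (hmemα i) (hmemα j) (fun hh => hij (hes.injective hh))
        rw [minorOn_eq A _ _ _ _ (hsm i) (hsm j) (hie i) (hie j)] at this
        simpa using this)
  rw [lval_eq A α h]
  have hlt_top : lval (A.submatrix e e) < ⊤ :=
    (lval_lt_of _ _).2 (Or.inr ⟨lam, hroot, EReal.coe_lt_top _⟩)
  refine ⟨hlt_top, fun a ha => ?_⟩
  obtain ⟨i, rfl⟩ : ∃ i, e i = a := by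
    rw [← him] at ha; simpa using ha
  have hcard : (α.erase (e i)).card = m := by rw [Finset.card_erase_of_mem ha, h]; rfl
  rw [lval_eq A _ hcard, ← Finset.orderEmbOfFin_unique hcard (f := e ∘ i.succAbove)
    (fun x => by rw [← hie i]; simp) (hsm i)]
  rcases lval_mem (A.submatrix (e ∘ i.succAbove) (e ∘ i.succAbove)) (Matrix.charpoly_monic _)
    with h1 | ⟨t, ht, h1⟩
  · rw [h1]; exact hlt_top
  · rw [h1]
    refine (lval_lt_of _ _).2 (Or.inr ⟨lam, hroot, ?_⟩)
    exact EReal.coe_lt_coe_iff.2 (hlt i t (sk_root_pos A hA _ (hsm i) t ht) (by simpa using ht))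

lemma sk_mono {n : ℕ} (A : Matrix (Fin n) (Fin n) ℝ) (hA : IsSK A) (β : Finset (Fin n))
    (hβ : β.Nonempty) (N : ℕ) : ∀ α : Finset (Fin n), α.card = N → β ⊂ α →
    lval (psub A α) < lval (psub A β) := by
  induction N with
  | zero =>
    intro α h hs
    rw [Finset.card_eq_zero] at h
    subst h
    exact absurd hs (Finset.not_ssubset_empty _)
  | succ m ih =>
    intro α h hs
    obtain ⟨a, ha, hb⟩ := Finset.exists_of_ssubset hs
    have h1 := (sk_step A hA α h).2 a ha
    have h2 : β ⊆ α.erase a := Finset.subset_erase.2 ⟨hs.1, hb⟩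
    rcases h2.eq_or_ssubset with h3 | h3
    · rwa [← h3] at h1
    · exact h1.trans (ih _ (by rw [Finset.card_erase_of_mem ha, h]; rfl) h3)

/-- Every SK-matrix is a strict τ-matrix (τ^<-matrix):
`l(A) > 0`, every principal submatrix of `A` has a real eigenvalue, and
`l(A(α)) < l(A(β)) < ∞` whenever `∅ ≠ β ⊊ α ⊆ {1,…,n}`. -/
theorem sk_is_strict_tau {n : ℕ} (A : Matrix (Fin n) (Fin n) ℝ) (hA : IsSK A) :
    (0 : EReal) < lval A ∧
    (∀ α : Finset (Fin n), α.Nonempty → lval (psub A α) < ⊤) ∧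
    (∀ α β : Finset (Fin n), β.Nonempty → β ⊂ α →
      lval (psub A α) < lval (psub A β) ∧ lval (psub A β) < ⊤) := by
  have htop : ∀ α : Finset (Fin n), α.Nonempty → lval (psub A α) < ⊤ := fun α hα => by
    obtain ⟨m, hm⟩ := Nat.exists_eq_succ_of_ne_zero (Finset.card_pos.2 hα).ne'
    exact (sk_step A hA α hm).1
  refine ⟨?_, htop, fun α β hβ hs => ⟨sk_mono A hA β hβ _ α rfl hs, htop β hβ⟩⟩
  rcases lval_mem A (Matrix.charpoly_monic _) with h | ⟨t, ht, h⟩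
  · rw [h]; exact EReal.zero_lt_top
  · rw [h]
    exact EReal.coe_pos.2 (sk_root_pos A hA id strictMono_id t (by simpa using ht))
end

section
/- Every STJS-matrix A is a τ^<-matrix: l(A) > 0, every principal submatrix of A has a real eigenvalue, and l(A(α)) < l(A(β)) < ∞ whenever ∅ ≠ β ⊊ α ⊆ {1,…,n}. -/
open Matrix

-- G(s) positivity
lemma core_pos {ι : Type*} [Fintype ι] [DecidableEq ι] (M P : Matrix ι ι ℝ)
    (hPM : P * M = 1) (hP : ∀ i j, 0 < P i j) (t : ℝ) (ht : 0 ≤ t)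
    (hdet : ∀ s ∈ Set.Icc 0 t, (M - s • (1 : Matrix ι ι ℝ)).det ≠ 0) :
    ∀ i j, 0 < (M - t • (1 : Matrix ι ι ℝ))⁻¹ i j := by
  set G : ℝ → Matrix ι ι ℝ := fun s => (M - s • (1 : Matrix ι ι ℝ))⁻¹ with hG
  have hGeq : ∀ s ∈ Set.Icc 0 t, G s = P + s • (P * G s) := by
    intro s hs
    have h1 : (M - s • (1 : Matrix ι ι ℝ)) * G s = 1 :=
      Matrix.mul_nonsing_inv _ (isUnit_iff_ne_zero.mpr (hdet s hs))
    have h2 : P * ((M - s • (1 : Matrix ι ι ℝ)) * G s) = P := by rw [h1, mul_one]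
    rw [← mul_assoc, mul_sub, hPM, Matrix.mul_smul, mul_one, sub_mul, one_mul,
      Matrix.smul_mul] at h2
    exact sub_eq_iff_eq_add.mp h2
  have hcont : ∀ i j, ContinuousOn (fun s => G s i j) (Set.Icc 0 t) := by
    intro i j
    have : ∀ s, G s i j = ((M - s • (1 : Matrix ι ι ℝ)).det)⁻¹ *
        (M - s • (1 : Matrix ι ι ℝ)).adjugate i j := by
      intro s; simp [hG, Matrix.inv_def, Ring.inverse_eq_inv']
    simp_rw [this]
    have hc : Continuous fun s : ℝ => M - s • (1 : Matrix ι ι ℝ) := by fun_prop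
    refine ContinuousOn.mul (ContinuousOn.inv₀ hc.matrix_det.continuousOn hdet) ?_
    exact (hc.matrix_adjugate.matrix_elem i j).continuousOn
  have hpos : ∀ s ∈ Set.Icc 0 t, (∀ i j, 0 ≤ G s i j) → ∀ i j, P i j ≤ G s i j := by
    intro s hs h i j
    rw [hGeq s hs]
    simp only [Matrix.add_apply, Matrix.smul_apply, Matrix.mul_apply, smul_eq_mul]
    have : 0 ≤ s * ∑ x, P i x * G s x j :=
      mul_nonneg hs.1 (Finset.sum_nonneg fun x _ => mul_nonneg (hP i x).le (h x j))
    linarith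
  have hsub : Set.Icc 0 t ⊆ {s | ∀ i j, P i j ≤ G s i j} := by
    apply IsClosed.Icc_subset_of_forall_mem_nhdsWithin
    · have : {s | ∀ i j, P i j ≤ G s i j} ∩ Set.Icc 0 t =
          Set.Icc 0 t ∩ ⋂ i, ⋂ j, (Set.Icc 0 t ∩ (fun s => G s i j) ⁻¹' Set.Ici (P i j)) := by
        ext s; simp only [Set.mem_inter_iff, Set.mem_ofPred_eq, Set.mem_iInter, Set.mem_preimage, Set.mem_Ici]
        constructor
        · rintro ⟨h, h'⟩; exact ⟨h', fun i j => ⟨h', h i j⟩⟩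
        · rintro ⟨h, h'⟩; exact ⟨fun i j => (h' i j).2, h⟩
      rw [this]
      refine isClosed_Icc.inter (isClosed_iInter fun i => isClosed_iInter fun j => ?_)
      exact (hcont i j).preimage_isClosed_of_isClosed isClosed_Icc isClosed_Ici
    · have := hGeq 0 ⟨le_rfl, ht⟩
      simp at this
      simp [this]
    · rintro x ⟨hx, hx1⟩
      have hx' : x ∈ Set.Icc 0 t := ⟨hx1.1, hx1.2.le⟩
      have hev : ∀ᶠ s in nhdsWithin x (Set.Icc 0 t), ∀ i j, 0 < G s i j := by
        rw [Filter.eventually_all]; intro i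
        rw [Filter.eventually_all]; intro j
        exact (hcont i j x hx').eventually (lt_mem_nhds ((hP i j).trans_le (hx i j)))
      have hle : nhdsWithin x (Set.Ioi x) ≤ nhdsWithin x (Set.Icc 0 t) := by
        rw [← nhdsWithin_Ioo_eq_nhdsGT hx1.2]
        exact nhdsWithin_mono _ fun y hy => ⟨hx1.1.trans hy.1.le, hy.2.le⟩
      filter_upwards [hle hev, hle self_mem_nhdsWithin] with s hs hs'
      exact hpos s hs' fun i j => (hs i j).le
  intro i j
  exact (hP i j).trans_le (hsub ⟨ht, le_rfl⟩ i j)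

lemma core_contra {ι : Type*} [Fintype ι] [DecidableEq ι] [Nonempty ι] (M P : Matrix ι ι ℝ)
    (hPM : P * M = 1) (hP : ∀ i j, 0 < P i j) (t : ℝ) (ht : 0 ≤ t)
    (hdet : ∀ s ∈ Set.Icc 0 t, (M - s • (1 : Matrix ι ι ℝ)).det ≠ 0)
    (u : ι → ℝ) (hu : ∀ i, 0 < u i) (hlt : ∀ i, u i < t * (P *ᵥ u) i) : False := by
  have hG := core_pos M P hPM hP t ht hdet
  have hMP : M * P = 1 := mul_eq_one_comm.mp hPM
  have h1 : (M - t • (1 : Matrix ι ι ℝ)) *ᵥ (P *ᵥ u) = u - t • (P *ᵥ u) := by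
    rw [Matrix.sub_mulVec, Matrix.mulVec_mulVec, hMP, Matrix.smul_mulVec, Matrix.one_mulVec,
      Matrix.one_mulVec]
  have h2 : P *ᵥ u = (M - t • (1 : Matrix ι ι ℝ))⁻¹ *ᵥ (u - t • (P *ᵥ u)) := by
    rw [← h1, Matrix.mulVec_mulVec, Matrix.nonsing_inv_mul _
      (isUnit_iff_ne_zero.mpr (hdet t ⟨ht, le_rfl⟩)), Matrix.one_mulVec]
  obtain ⟨i⟩ := ‹Nonempty ι›
  have h3 : 0 < (P *ᵥ u) i := by
    simp only [Matrix.mulVec, dotProduct]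
    exact Finset.sum_pos (fun j _ => mul_pos (hP i j) (hu j)) ⟨i, Finset.mem_univ _⟩
  have h4 : ((M - t • (1 : Matrix ι ι ℝ))⁻¹ *ᵥ (u - t • (P *ᵥ u))) i < 0 := by
    simp only [Matrix.mulVec, dotProduct]
    refine Finset.sum_neg (fun j _ => mul_neg_of_pos_of_neg (hG i j) ?_) ⟨i, Finset.mem_univ _⟩
    have := hlt j
    simp only [Matrix.mulVec, dotProduct] at this
    simp [Matrix.mulVec, dotProduct]; linarith
  rw [← h2] at h4
  linarith

lemma core_exists {ι : Type*} [Fintype ι] [DecidableEq ι] [Nonempty ι] (M P : Matrix ι ι ℝ)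
    (hPM : P * M = 1) (hP : ∀ i j, 0 < P i j) :
    ∃ t : ℝ, (M - t • (1 : Matrix ι ι ℝ)).det = 0 := by
  by_contra! h
  have hpos : ∀ i, 0 < (P *ᵥ (fun _ => (1:ℝ))) i := fun i => by
    simp only [Matrix.mulVec, dotProduct]
    exact Finset.sum_pos (fun j _ => by simpa using (hP i j)) ⟨i, Finset.mem_univ _⟩
  have : ∃ t : ℝ, 0 ≤ t ∧ ∀ i, 1 < t * (P *ᵥ (fun _ => (1:ℝ))) i := by
    have : ∀ᶠ t : ℝ in Filter.atTop, 0 ≤ t ∧ ∀ i, 1 < t * (P *ᵥ (fun _ => (1:ℝ))) i := by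
      refine (Filter.eventually_ge_atTop 0).and (Filter.eventually_all.mpr fun i => ?_)
      exact (Filter.tendsto_id.atTop_mul_const (hpos i)).eventually_gt_atTop 1
    exact this.exists
  obtain ⟨t, ht, h1⟩ := this
  exact core_contra M P hPM hP t ht (fun s _ => h s) (fun _ => 1) (fun _ => one_pos) h1

lemma core_lt {ι : Type*} [Fintype ι] [DecidableEq ι] (M P : Matrix ι ι ℝ)
    (hPM : P * M = 1) (hP : ∀ i j, 0 < P i j) (t₁ : ℝ) (ht₁ : 0 < t₁) (v : ι → ℝ) (hv : v ≠ 0)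
    (i : ι) (hvi : v i = 0) (hMv : ∀ j, j ≠ i → (M *ᵥ v) j = t₁ * v j) :
    ∃ t : ℝ, t < t₁ ∧ (M - t • (1 : Matrix ι ι ℝ)).det = 0 := by
  have : Nonempty ι := ⟨i⟩
  wlog hc : 0 ≤ (M *ᵥ v) i generalizing v
  · refine this (-v) (neg_ne_zero.mpr hv) (by simp [hvi]) ?_ ?_
    · intro j hj; simp [Matrix.mulVec_neg, hMv j hj]
    · simp only [Matrix.mulVec_neg, Pi.neg_apply]; linarith
  by_contra! hno
  have hPpos : ∀ u : ι → ℝ, (∀ j, 0 ≤ u j) → u ≠ 0 → ∀ j, 0 < (P *ᵥ u) j := by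
    intro u hu hu0 j
    obtain ⟨k, hk⟩ := Function.ne_iff.mp hu0
    simp only [Matrix.mulVec, dotProduct]
    exact Finset.sum_pos' (fun l _ => mul_nonneg (hP j l).le (hu l))
      ⟨k, Finset.mem_univ _, mul_pos (hP j k) (lt_of_le_of_ne (hu k) (Ne.symm hk))⟩
  set c := (M *ᵥ v) i with hcdef
  have hMv' : M *ᵥ v = t₁ • v + Pi.single i c := by
    ext j
    by_cases hj : j = i
    · subst hj; simp [hvi, hcdef]
    · simp [hMv j hj, hj]
  have hveq : ∀ j, v j = t₁ * (P *ᵥ v) j + c * P j i := by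
    intro j
    have : P *ᵥ (M *ᵥ v) = v := by rw [Matrix.mulVec_mulVec, hPM, Matrix.one_mulVec]
    rw [hMv', Matrix.mulVec_add, Matrix.mulVec_smul] at this
    have := congrFun this j
    simp [Matrix.mulVec_single] at this
    linarith
  set u : ι → ℝ := fun j => max (- v j) 0 with hu
  have hu0 : ∀ j, 0 ≤ u j := fun j => le_max_right _ _
  have hune : u ≠ 0 := by
    intro h0
    have hvnn : ∀ j, 0 ≤ v j := by
      intro j
      have := congrFun h0 j
      have h2 : -v j ≤ u j := le_max_left _ _
      rw [this] at h2; simpa using h2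
    have h1 := hPpos v hvnn hv i
    have h2 := hveq i
    rw [hvi] at h2
    have := mul_pos ht₁ h1
    have := mul_nonneg hc (hP i i).le
    linarith
  have hPu := hPpos u hu0 hune
  have hmono : ∀ j, - (P *ᵥ v) j ≤ (P *ᵥ u) j := by
    intro j
    simp only [Matrix.mulVec, dotProduct, ← Finset.sum_neg_distrib]
    refine Finset.sum_le_sum fun k _ => ?_
    have : -v k ≤ u k := le_max_left _ _
    nlinarith [hP j k]
  have hule : ∀ j, u j ≤ t₁ * (P *ᵥ u) j := by
    intro j
    refine max_le ?_ (mul_pos ht₁ (hPu j)).le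
    have h1 := hveq j
    have h2 := mul_le_mul_of_nonneg_left (hmono j) ht₁.le
    have := mul_nonneg hc (hP j i).le
    linarith
  have hstrict : u i < t₁ * (P *ᵥ u) i := by
    have : u i = 0 := by simp [hu, hvi]
    rw [this]; exact mul_pos ht₁ (hPu i)
  set w : ι → ℝ := t₁ • (P *ᵥ u) - u with hw
  have hw0 : ∀ j, 0 ≤ w j := fun j => by simp [hw]; exact hule j
  have hwne : w ≠ 0 := by
    intro h; have := congrFun h i; simp [hw] at this; linarith
  have hPw := hPpos w hw0 hwne
  have hlt : ∀ j, (P *ᵥ u) j < t₁ * (P *ᵥ (P *ᵥ u)) j := by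
    intro j
    have := hPw j
    rw [hw, Matrix.mulVec_sub, Matrix.mulVec_smul] at this
    simp only [Pi.sub_apply, Pi.smul_apply, smul_eq_mul] at this; linarith
  have : ∃ t : ℝ, t ∈ Set.Ioo 0 t₁ ∧ ∀ j, (P *ᵥ u) j < t * (P *ᵥ (P *ᵥ u)) j := by
    have hev : ∀ᶠ t : ℝ in nhdsWithin t₁ (Set.Iio t₁),
        t ∈ Set.Ioo 0 t₁ ∧ ∀ j, (P *ᵥ u) j < t * (P *ᵥ (P *ᵥ u)) j := by
      refine Filter.Eventually.and (Ioo_mem_nhdsLT ht₁) (Filter.eventually_all.mpr fun j => ?_)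
      apply Filter.Eventually.filter_mono nhdsWithin_le_nhds
      have hcn : Continuous fun t : ℝ => t * (P *ᵥ (P *ᵥ u)) j := by fun_prop
      exact hcn.continuousAt.eventually (lt_mem_nhds (hlt j))
    exact hev.exists
  obtain ⟨t, ht, h⟩ := this
  exact core_contra M P hPM hP t ht.1.le (fun s hs => hno s (hs.2.trans_lt ht.2)) _ hPu h

lemma signed_aux {ι : Type*} [Fintype ι] [DecidableEq ι] (M : Matrix ι ι ℝ)
    (η : ι → ℝ) (hη : ∀ i, η i * η i = 1) (hdet : 0 < M.det)
    (hs : ∀ i j, 0 < η i * η j * M.adjugate i j) :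
    (M.det⁻¹ • (diagonal η * M.adjugate * diagonal η)) * (diagonal η * M * diagonal η) = 1 ∧
    (∀ i j, 0 < (M.det⁻¹ • (diagonal η * M.adjugate * diagonal η)) i j) ∧
    (∀ t : ℝ, (diagonal η * M * diagonal η - t • (1 : Matrix ι ι ℝ)).det = 0 →
      (M - t • (1 : Matrix ι ι ℝ)).det = 0) := by
  have hD : (diagonal η * diagonal η : Matrix ι ι ℝ) = 1 := by
    rw [diagonal_mul_diagonal, ← diagonal_one]; congr 1; ext i; exact hη i
  refine ⟨?_, ?_, ?_⟩
  · have : diagonal η * M.adjugate * diagonal η * (diagonal η * M * diagonal η)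
      = diagonal η * M.adjugate * (diagonal η * diagonal η) * M * diagonal η := by
      simp only [mul_assoc]
    rw [Matrix.smul_mul, this, hD, mul_one, mul_assoc (diagonal η), adjugate_mul,
      Matrix.mul_smul, mul_one, Matrix.smul_mul, hD, smul_smul, inv_mul_cancel₀ hdet.ne', one_smul]
  · intro i j
    rw [Matrix.smul_apply, mul_diagonal, diagonal_mul, smul_eq_mul]
    have := hs i j
    have : η i * M.adjugate i j * η j = η i * η j * M.adjugate i j := by ring
    rw [this]
    exact mul_pos (inv_pos.mpr hdet) (hs i j)
  · intro t h
    have : diagonal η * M * diagonal η - t • (1 : Matrix ι ι ℝ)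
        = diagonal η * (M - t • (1 : Matrix ι ι ℝ)) * diagonal η := by
      rw [mul_sub, sub_mul, Matrix.mul_smul, mul_one, Matrix.smul_mul, hD]
    rw [this, det_mul, det_mul] at h
    have h2 : (diagonal η).det * (diagonal η).det = 1 := by rw [← det_mul, hD, det_one]
    have h3 : (diagonal η).det ≠ 0 := by intro h0; simp [h0] at h2
    rcases mul_eq_zero.mp h with h | h
    · exact (mul_eq_zero.mp h).resolve_left h3
    · exact absurd h h3

lemma signed_exists {ι : Type*} [Fintype ι] [DecidableEq ι] [Nonempty ι] (M : Matrix ι ι ℝ)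
    (η : ι → ℝ) (hη : ∀ i, η i * η i = 1) (hdet : 0 < M.det)
    (hs : ∀ i j, 0 < η i * η j * M.adjugate i j) :
    ∃ t : ℝ, (M - t • (1 : Matrix ι ι ℝ)).det = 0 := by
  obtain ⟨h1, h2, h3⟩ := signed_aux M η hη hdet hs
  obtain ⟨t, ht⟩ := core_exists _ _ h1 h2
  exact ⟨t, h3 t ht⟩

lemma signed_lt {ι : Type*} [Fintype ι] [DecidableEq ι] (M : Matrix ι ι ℝ)
    (η : ι → ℝ) (hη : ∀ i, η i * η i = 1) (hdet : 0 < M.det)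
    (hs : ∀ i j, 0 < η i * η j * M.adjugate i j)
    (t₁ : ℝ) (ht₁ : 0 < t₁) (v : ι → ℝ) (hv : v ≠ 0)
    (i : ι) (hvi : v i = 0) (hMv : ∀ j, j ≠ i → (M *ᵥ v) j = t₁ * v j) :
    ∃ t : ℝ, t < t₁ ∧ (M - t • (1 : Matrix ι ι ℝ)).det = 0 := by
  obtain ⟨h1, h2, h3⟩ := signed_aux M η hη hdet hs
  have hη0 : ∀ i, η i ≠ 0 := fun i h => by simpa [h] using hη i
  have key : diagonal η *ᵥ (diagonal η *ᵥ v) = v := by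
    ext j; rw [mulVec_diagonal, mulVec_diagonal, ← mul_assoc, hη, one_mul]
  obtain ⟨t, ht, ht'⟩ := core_lt _ _ h1 h2 t₁ ht₁ (diagonal η *ᵥ v) (by
      intro h; rw [h] at key; simp at key; exact hv key.symm) i
      (by rw [mulVec_diagonal, hvi, mul_zero]) (by
      intro j hj
      rw [← mulVec_mulVec, key, ← mulVec_mulVec, mulVec_diagonal, mulVec_diagonal, hMv j hj]
      ring)
  exact ⟨t, ht, h3 t ht'⟩

/-- eigenvector supported on `α`. -/
def QEig {n : ℕ} (A : Matrix (Fin n) (Fin n) ℝ) (α : Finset (Fin n)) (t : ℝ) : Prop :=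
  ∃ v : Fin n → ℝ, v ≠ 0 ∧ (∀ i, i ∉ α → v i = 0) ∧ ∀ i ∈ α, (A *ᵥ v) i = t * v i

lemma restrict_mulVec {n k : ℕ} (A : Matrix (Fin n) (Fin n) ℝ) (α : Finset (Fin n))
    (h : α.card = k) (v : Fin n → ℝ) (hv : ∀ i, i ∉ α → v i = 0) (a : Fin k) :
    (A.submatrix (α.orderEmbOfFin h) (α.orderEmbOfFin h) *ᵥ (v ∘ α.orderEmbOfFin h)) a
      = (A *ᵥ v) (α.orderEmbOfFin h a) := by
  simp only [mulVec, dotProduct, submatrix_apply, Function.comp]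
  have h1 : ∑ j, A (α.orderEmbOfFin h a) j * v j = ∑ j ∈ α, A (α.orderEmbOfFin h a) j * v j :=
    (Finset.sum_subset (Finset.subset_univ α) (fun j _ hj => by simp [hv j hj])).symm
  rw [h1]
  have h2 := Finset.sum_map Finset.univ (α.orderEmbOfFin h).toEmbedding
    (fun j => A (α.orderEmbOfFin h a) j * v j)
  rw [Finset.map_orderEmbOfFin_univ] at h2
  exact h2.symm

lemma det_sub_iff {n k : ℕ} (A : Matrix (Fin n) (Fin n) ℝ) (α : Finset (Fin n))
    (h : α.card = k) (t : ℝ) :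
    (A.submatrix (α.orderEmbOfFin h) (α.orderEmbOfFin h) - t • (1 : Matrix (Fin k) (Fin k) ℝ)).det = 0
      ↔ QEig A α t := by
  have hr : ∀ i, i ∈ α → ∃ a, α.orderEmbOfFin h a = i := by
    intro i hi
    have : i ∈ Set.range (α.orderEmbOfFin h) := by rw [Finset.range_orderEmbOfFin]; exact hi
    exact this
  rw [← exists_mulVec_eq_zero_iff]
  constructor
  · rintro ⟨w, hw, hw0⟩
    set v : Fin n → ℝ := Function.extend (α.orderEmbOfFin h) w 0 with hvdef
    have hvw : v ∘ α.orderEmbOfFin h = w :=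
      Function.extend_comp (α.orderEmbOfFin h).injective w 0
    have hv : ∀ i, i ∉ α → v i = 0 := by
      intro i hi
      rw [hvdef, Function.extend_apply']
      · rfl
      · rintro ⟨a, rfl⟩; exact hi (Finset.orderEmbOfFin_mem _ _ _)
    refine ⟨v, ?_, hv, ?_⟩
    · intro h0; apply hw; rw [← hvw, h0]; rfl
    · intro i hi
      obtain ⟨a, rfl⟩ := hr i hi
      rw [← restrict_mulVec A α h v hv, hvw]
      have := congrFun hw0 a
      rw [sub_mulVec, smul_mulVec, one_mulVec] at this
      have h2 : v (α.orderEmbOfFin h a) = w a := congrFun hvw a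
      rw [h2]
      simp only [Pi.sub_apply, Pi.smul_apply, smul_eq_mul, Pi.zero_apply] at this
      linarith
  · rintro ⟨v, hv0, hv, hAv⟩
    refine ⟨v ∘ α.orderEmbOfFin h, ?_, ?_⟩
    · intro h0
      apply hv0
      ext i
      by_cases hi : i ∈ α
      · obtain ⟨a, rfl⟩ := hr i hi
        exact congrFun h0 a
      · exact hv i hi
    · ext a
      rw [sub_mulVec, smul_mulVec, one_mulVec, Pi.sub_apply, restrict_mulVec A α h v hv,
        hAv _ (Finset.orderEmbOfFin_mem _ _ _)]
      simp

lemma det_neg_sub {k : ℕ} (B : Matrix (Fin k) (Fin k) ℝ) (t : ℝ) :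
    B.charpoly.IsRoot t ↔ (B - t • (1 : Matrix (Fin k) (Fin k) ℝ)).det = 0 := by
  rw [Polynomial.IsRoot.def, Matrix.eval_charpoly]
  have : scalar (Fin k) t - B = -(B - t • (1 : Matrix (Fin k) (Fin k) ℝ)) := by
    rw [neg_sub]; congr 1; ext i j; simp [Matrix.one_apply, diagonal_apply]
  rw [this, det_neg]
  simp

lemma root_iff_s3 {n : ℕ} (A : Matrix (Fin n) (Fin n) ℝ) (α : Finset (Fin n)) (t : ℝ) :
    (psub A α).charpoly.IsRoot t ↔ QEig A α t := by
  rw [det_neg_sub, ← det_sub_iff A α rfl]; rfl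

/-- rows outside `γ` replaced by identity rows -/
def Rm {n : ℕ} (M : Matrix (Fin n) (Fin n) ℝ) (γ : Finset (Fin n)) : Matrix (Fin n) (Fin n) ℝ :=
  fun i j => if i ∈ γ then M i j else if i = j then 1 else 0

lemma Rm_add {n : ℕ} (M : Matrix (Fin n) (Fin n) ℝ) (γ : Finset (Fin n)) (i : Fin n) (hi : i ∈ γ)
    (s : ℝ) : (Rm (M + s • Matrix.single i i 1) γ).det = (Rm M γ).det + s * (Rm M (γ.erase i)).det := by
  have h1 : Rm (M + s • Matrix.single i i 1) γ
      = updateRow (Rm M γ) i (Rm M γ i + s • Pi.single i 1) := by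
    ext a b
    by_cases ha : a = i
    · subst ha
      by_cases hb : b = a
      · subst hb; simp [Rm, hi]
      · simp [Rm, hi, hb, Matrix.single, Ne.symm hb]
    · simp [Rm, ha, Matrix.single, Ne.symm ha]
  have h2 : Rm M (γ.erase i) = updateRow (Rm M γ) i (Pi.single i 1) := by
    ext a b
    by_cases ha : a = i
    · subst ha; simp [Rm, Pi.single_apply, eq_comm]
    · simp [Rm, ha]
  rw [h1, det_updateRow_add, det_updateRow_smul, h2, updateRow_eq_self]

lemma Rm_pos {n : ℕ} (M : Matrix (Fin n) (Fin n) ℝ) (hM : ∀ γ, 0 < (Rm M γ).det)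
    (s : ℝ) (hs : 0 ≤ s) (σ : Finset (Fin n)) :
    ∀ γ, 0 < (Rm (M + ∑ i ∈ σ, s • Matrix.single i i 1) γ).det := by
  induction σ using Finset.induction_on with
  | empty => simpa using hM
  | insert i σ hi ih =>
    intro γ
    rw [Finset.sum_insert hi, add_comm (s • _), ← add_assoc]
    by_cases hg : i ∈ γ
    · rw [Rm_add _ _ _ hg]
      exact add_pos_of_pos_of_nonneg (ih γ) (mul_nonneg hs (ih _).le)
    · have : Rm (M + ∑ i ∈ σ, s • Matrix.single i i 1 + s • Matrix.single i i 1) γ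
        = Rm (M + ∑ i ∈ σ, s • Matrix.single i i 1) γ := by
        ext a b
        by_cases ha : a ∈ γ
        · have : i ≠ a := by rintro rfl; exact hg ha
          simp [Rm, ha, Matrix.single, this]
        · simp [Rm, ha]
      rw [this]; exact ih γ

lemma Rm_det {n : ℕ} (A : Matrix (Fin n) (Fin n) ℝ) (γ : Finset (Fin n)) :
    (Rm A γ).det = minorOn A γ γ := by
  rw [twoBlockTriangular_det (Rm A γ) (fun i => i ∈ γ) (by
    intro i hi j hj
    have : i ≠ j := by rintro rfl; exact hi hj
    simp [Rm, hi, this])]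
  have h2 : toSquareBlockProp (Rm A γ) (fun i => ¬ i ∈ γ) = 1 := by
    ext i j
    simp [toSquareBlockProp_def, Rm, i.2, Matrix.one_apply, Subtype.ext_iff]
  rw [h2, det_one, mul_one]
  have : minorOn A γ γ = (A.submatrix (γ.orderEmbOfFin rfl) (γ.orderEmbOfFin rfl)).det := by
    simp [minorOn]
  have h3 := det_submatrix_equiv_self (γ.orderIsoOfFin rfl).toEquiv
    (toSquareBlockProp (Rm A γ) (fun i => i ∈ γ))
  rw [this]
  refine Eq.trans ?_ (h3.symm.trans ?_)
  · congr!
  congr 1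
  ext a b
  simp [toSquareBlockProp_def, Rm]

lemma QEig_pos {n : ℕ} (A : Matrix (Fin n) (Fin n) ℝ) (hA : ∀ γ, 0 < minorOn A γ γ)
    (α : Finset (Fin n)) (t : ℝ) (h : QEig A α t) : 0 < t := by
  by_contra! ht
  obtain ⟨v, hv0, hv, hAv⟩ := h
  have hp := Rm_pos A (fun γ => by rw [Rm_det]; exact hA γ) (-t) (by linarith) Finset.univ α
  have hsum : ∑ i : Fin n, (-t) • (Matrix.single i i 1 : Matrix (Fin n) (Fin n) ℝ)
      = (-t) • (1 : Matrix (Fin n) (Fin n) ℝ) := by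
    rw [← Finset.smul_sum]; congr 1
    ext a b
    simp [Matrix.sum_apply, Matrix.single, Matrix.one_apply, Finset.sum_ite, Finset.filter_and, Finset.filter_eq', Finset.filter_eq]
    split_ifs <;> simp_all
  rw [hsum] at hp
  apply hp.ne'
  rw [← exists_mulVec_eq_zero_iff]
  refine ⟨v, hv0, ?_⟩
  ext i
  by_cases hi : i ∈ α
  · have : (Rm (A + (-t) • (1 : Matrix (Fin n) (Fin n) ℝ)) α *ᵥ v) i
      = ((A + (-t) • (1 : Matrix (Fin n) (Fin n) ℝ)) *ᵥ v) i := by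
      simp [mulVec, dotProduct, Rm, hi]
    rw [this, add_mulVec, smul_mulVec, one_mulVec, Pi.add_apply, hAv i hi]
    simp
  · simp [mulVec, dotProduct, Rm, hi, hv i hi]

lemma stjs_sign {n : ℕ} (A : Matrix (Fin n) (Fin n) ℝ) (hA : IsSTJS A) (j : ℕ) :
    ∃ ε : Finset (Fin n) → ℝ, (∀ s, ε s * ε s = 1) ∧
      ∀ s t, s.card = j → t.card = j → 0 < ε s * ε t * minorOn A s t := by
  classical
  by_cases hj : 1 ≤ j ∧ j ≤ n
  · obtain ⟨J, ⟨h1, h2⟩, h3⟩ := hA j hj.1 hj.2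
    refine ⟨fun s => if ∃ h : s.card = j, (⟨s, h⟩ : {s : Finset (Fin n) // s.card = j}) ∈ J
      then 1 else -1, ?_, ?_⟩
    · intro s; dsimp only; split_ifs <;> norm_num
    · intro s t hs ht
      have e1 := h1 ⟨s, hs⟩ ⟨t, ht⟩
      have e2 := h2 ⟨s, hs⟩ ⟨t, ht⟩
      have e3 := h3 ⟨s, hs⟩ ⟨t, ht⟩
      simp only [compound] at e1 e2 e3
      simp only [hs, ht, exists_true_left]
      by_cases a : (⟨s, hs⟩ : {s : Finset (Fin n) // s.card = j}) ∈ J <;>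
      by_cases b : (⟨t, ht⟩ : {s : Finset (Fin n) // s.card = j}) ∈ J
      · simp only [a, b, if_true]
        have := lt_of_le_of_ne (e1 (by tauto)) e3.symm
        linarith
      · simp only [a, b, if_true, if_false]
        have := lt_of_le_of_ne (e2 (by tauto)) e3
        linarith
      · simp only [a, b, if_true, if_false]
        have := lt_of_le_of_ne (e2 (by tauto)) e3
        linarith
      · simp only [a, b, if_false]
        have := lt_of_le_of_ne (e1 (by tauto)) e3.symm
        linarith
  · refine ⟨fun _ => 1, by simp, ?_⟩
    intro s t hs ht
    have hle : s.card ≤ n := by simpa using Finset.card_le_univ s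
    have h0 : j = 0 := by omega
    subst h0
    rw [Finset.card_eq_zero] at hs ht
    subst hs; subst ht
    simp [minorOn]

lemma stjs_pos {n : ℕ} (A : Matrix (Fin n) (Fin n) ℝ) (hA : IsSTJS A) (γ : Finset (Fin n)) :
    0 < minorOn A γ γ := by
  obtain ⟨ε, h1, h2⟩ := stjs_sign A hA γ.card
  have := h2 γ γ rfl rfl
  rwa [h1, one_mul] at this

lemma minor_succ {n m : ℕ} (A : Matrix (Fin n) (Fin n) ℝ) (α : Finset (Fin n))
    (h : α.card = m + 1) (a b : Fin (m + 1)) :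
    ((A.submatrix (α.orderEmbOfFin h) (α.orderEmbOfFin h)).submatrix a.succAbove b.succAbove).det
      = minorOn A (α.erase (α.orderEmbOfFin h a)) (α.erase (α.orderEmbOfFin h b)) := by
  have hc : ∀ a, (α.erase (α.orderEmbOfFin h a)).card = m := fun a => by
    rw [Finset.card_erase_of_mem (Finset.orderEmbOfFin_mem _ _ _), h]; rfl
  have he : ∀ a : Fin (m+1), (α.orderEmbOfFin h) ∘ a.succAbove
      = (α.erase (α.orderEmbOfFin h a)).orderEmbOfFin (hc a) := by
    intro a
    apply Finset.orderEmbOfFin_unique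
    · intro x
      rw [Finset.mem_erase]
      refine ⟨fun hx => ?_, Finset.orderEmbOfFin_mem _ _ _⟩
      exact Fin.succAbove_ne a x ((α.orderEmbOfFin h).injective hx)
    · exact (α.orderEmbOfFin h).strictMono.comp (Fin.strictMono_succAbove a)
  rw [submatrix_submatrix, he, he]
  have gen : ∀ (s t : Finset (Fin n)) (k : ℕ) (hs : s.card = k) (ht : t.card = k),
      (A.submatrix (s.orderEmbOfFin hs) (t.orderEmbOfFin ht)).det = minorOn A s t := by
    intro s t k hs ht
    subst hs
    simp [minorOn, ht]
  exact gen _ _ _ _ _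

lemma stjs_adj {n m : ℕ} (A : Matrix (Fin n) (Fin n) ℝ) (hA : IsSTJS A) (α : Finset (Fin n))
    (h : α.card = m + 1) :
    0 < (A.submatrix (α.orderEmbOfFin h) (α.orderEmbOfFin h)).det ∧
    ∃ η : Fin (m + 1) → ℝ, (∀ i, η i * η i = 1) ∧ ∀ i j, 0 < η i * η j *
      (A.submatrix (α.orderEmbOfFin h) (α.orderEmbOfFin h)).adjugate i j := by
  constructor
  · have := stjs_pos A hA α
    have e : minorOn A α α = (A.submatrix (α.orderEmbOfFin h) (α.orderEmbOfFin h)).det := by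
      have gen : ∀ (k : ℕ) (hs : α.card = k),
          (A.submatrix (α.orderEmbOfFin hs) (α.orderEmbOfFin hs)).det = minorOn A α α := by
        intro k hs
        subst hs
        simp [minorOn]
      exact (gen _ h).symm
    rwa [e] at this
  · obtain ⟨ε, h1, h2⟩ := stjs_sign A hA m
    have hc : ∀ a, (α.erase (α.orderEmbOfFin h a)).card = m := fun a => by
      rw [Finset.card_erase_of_mem (Finset.orderEmbOfFin_mem _ _ _), h]; rfl
    have hsq : ∀ k : ℕ, ((-1 : ℝ) ^ k) * (-1) ^ k = 1 := fun k => by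
      rw [← mul_pow]; norm_num
    refine ⟨fun i => (-1) ^ (i : ℕ) * ε (α.erase (α.orderEmbOfFin h i)), ?_, ?_⟩
    · intro i
      have := hsq i
      have := h1 (α.erase (α.orderEmbOfFin h i))
      linear_combination (ε (α.erase (α.orderEmbOfFin h i)))^2 * hsq i + this
    · intro i j
      rw [adjugate_fin_succ_eq_det_submatrix, minor_succ A α h]
      have := h2 _ _ (hc j) (hc i)
      convert this using 1
      rw [pow_add]
      linear_combination (ε (α.erase (α.orderEmbOfFin h i)) * ε (α.erase (α.orderEmbOfFin h j)) * minorOn A (α.erase (α.orderEmbOfFin h j)) (α.erase (α.orderEmbOfFin h i))) * ((-1)^(j:ℕ)*(-1)^(j:ℕ) * hsq i + hsq j)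

lemma QEig_exists {n : ℕ} (A : Matrix (Fin n) (Fin n) ℝ) (hA : IsSTJS A) (α : Finset (Fin n))
    (hα : α.Nonempty) : ∃ t, QEig A α t := by
  obtain ⟨m, h⟩ : ∃ m, α.card = m + 1 := ⟨α.card - 1, by have := hα.card_pos; omega⟩
  obtain ⟨hd, η, h1, h2⟩ := stjs_adj A hA α h
  obtain ⟨t, ht⟩ := signed_exists _ η h1 hd h2
  exact ⟨t, (det_sub_iff A α h t).mp ht⟩

lemma QEig_lt {n : ℕ} (A : Matrix (Fin n) (Fin n) ℝ) (hA : IsSTJS A) (α : Finset (Fin n))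
    (i : Fin n) (hi : i ∈ α) (t₁ : ℝ) (hQ : QEig A (α.erase i) t₁) : ∃ t < t₁, QEig A α t := by
  obtain ⟨m, h⟩ : ∃ m, α.card = m + 1 :=
    ⟨α.card - 1, by have := Finset.card_pos.mpr ⟨i, hi⟩; omega⟩
  obtain ⟨hd, η, h1, h2⟩ := stjs_adj A hA α h
  have ht₁ := QEig_pos A (stjs_pos A hA) _ _ hQ
  obtain ⟨v, hv0, hv, hAv⟩ := hQ
  have hv' : ∀ i, i ∉ α → v i = 0 := fun j hj => hv j fun hj' => hj (Finset.mem_of_mem_erase hj')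
  have hr : ∀ i, i ∈ α → ∃ a, α.orderEmbOfFin h a = i := by
    intro i hi
    have : i ∈ Set.range (α.orderEmbOfFin h) := by rw [Finset.range_orderEmbOfFin]; exact hi
    exact this
  obtain ⟨a, rfl⟩ := hr i hi
  obtain ⟨t, ht, hdt⟩ := signed_lt _ η h1 hd h2 t₁ ht₁ (v ∘ α.orderEmbOfFin h) (by
    intro h0
    apply hv0
    ext i
    by_cases hi : i ∈ α
    · obtain ⟨a, rfl⟩ := hr i hi
      exact congrFun h0 a
    · exact hv' i hi) a (hv _ (by simp)) (by
    intro j hj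
    rw [restrict_mulVec A α h v hv']
    exact hAv _ (Finset.mem_erase.mpr ⟨fun e => hj ((α.orderEmbOfFin h).injective e),
      Finset.orderEmbOfFin_mem _ _ _⟩))
  exact ⟨t, ht, (det_sub_iff A α h t).mp hdt⟩

lemma QEig_lt' {n : ℕ} (A : Matrix (Fin n) (Fin n) ℝ) (hA : IsSTJS A) (k : ℕ) :
    ∀ (α β : Finset (Fin n)), α.card = k → β ⊂ α → ∀ t₁, QEig A β t₁ → ∃ t < t₁, QEig A α t := by
  induction k with
  | zero =>
    intro α β h hb
    have := Finset.card_lt_card hb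
    omega
  | succ k ih =>
    intro α β h hb t₁ hQ
    obtain ⟨i, hi, hib⟩ := Finset.exists_of_ssubset hb
    have hsub : β ⊆ α.erase i := Finset.subset_erase.mpr ⟨hb.1, hib⟩
    rcases hsub.eq_or_ssubset with e | e
    · subst e; exact QEig_lt A hA α i hi t₁ hQ
    · obtain ⟨t, ht, hq⟩ := ih _ _ (by rw [Finset.card_erase_of_mem hi, h]; rfl) e t₁ hQ
      obtain ⟨t', ht', hq'⟩ := QEig_lt A hA α i hi t hq
      exact ⟨t', ht'.trans ht, hq'⟩

lemma lval_le {m : ℕ} (B : Matrix (Fin m) (Fin m) ℝ) (t : ℝ) (h : B.charpoly.IsRoot t) :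
    lval B ≤ t := sInf_le (Set.mem_insert_of_mem _ ⟨t, h, rfl⟩)

lemma lval_attained {m : ℕ} (B : Matrix (Fin m) (Fin m) ℝ) :
    lval B = ⊤ ∨ ∃ t : ℝ, B.charpoly.IsRoot t ∧ lval B = t := by
  have hfin : (insert (⊤ : EReal) ((fun t : ℝ => (t : EReal)) '' {t : ℝ | B.charpoly.IsRoot t})).Finite :=
    ((Polynomial.finite_setOfPred_isRoot B.charpoly_monic.ne_zero).image _).insert _
  have := (Set.insert_nonempty _ _).csInf_mem hfin
  rcases this with h | ⟨t, ht, h⟩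
  · exact Or.inl h
  · exact Or.inr ⟨t, ht, h.symm⟩

/-- Every STJS-matrix is a strict τ-matrix (τ^<-matrix):
`l(A) > 0`, every principal submatrix of `A` has a real eigenvalue, and
`l(A(α)) < l(A(β)) < ∞` whenever `∅ ≠ β ⊊ α ⊆ {1,…,n}`. -/
theorem stjs_is_strict_tau {n : ℕ} (A : Matrix (Fin n) (Fin n) ℝ) (hA : IsSTJS A) :
    (0 : EReal) < lval A ∧
    (∀ α : Finset (Fin n), α.Nonempty → lval (psub A α) < ⊤) ∧
    (∀ α β : Finset (Fin n), β.Nonempty → β ⊂ α →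
      lval (psub A α) < lval (psub A β) ∧ lval (psub A β) < ⊤) := by
  have hfin : ∀ α : Finset (Fin n), α.Nonempty → lval (psub A α) < ⊤ := by
    intro α hα
    obtain ⟨t, ht⟩ := QEig_exists A hA α hα
    exact (lval_le _ t ((root_iff_s3 A α t).mpr ht)).trans_lt (EReal.coe_lt_top t)
  refine ⟨?_, hfin, ?_⟩
  · rcases lval_attained A with h | ⟨t, ht, h⟩
    · rw [h]; exact EReal.coe_lt_top 0
    · rw [h]
      have hQ : QEig A Finset.univ t := by
        rw [det_neg_sub, ← exists_mulVec_eq_zero_iff] at ht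
        obtain ⟨v, hv, hv0⟩ := ht
        refine ⟨v, hv, by simp, fun i _ => ?_⟩
        have := congrFun hv0 i
        rw [sub_mulVec, smul_mulVec, one_mulVec] at this
        simp only [Pi.sub_apply, Pi.smul_apply, smul_eq_mul, Pi.zero_apply] at this
        linarith
      exact_mod_cast QEig_pos A (stjs_pos A hA) _ t hQ
  · intro α β hβ hβα
    refine ⟨?_, hfin β hβ⟩
    rcases lval_attained (psub A β) with h | ⟨t, ht, h⟩
    · exact absurd h (hfin β hβ).ne
    · obtain ⟨t', ht', hq⟩ := QEig_lt' A hA _ α β rfl hβα t ((root_iff_s3 A β t).mp ht)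
      rw [h]
      exact (lval_le _ t' ((root_iff_s3 A α t').mpr hq)).trans_lt (by exact_mod_cast ht')
end
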